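/- (Convergence guarantee for MS.) Assume Assumptions RS and QM, and let (y_t)_{t∈ℕ} be the mode estimate sequence obtained by the MS iteration starting from y₁ with f(y₁) > 0. Assume further that for some τ ∈ ℕ, with S := closure of the convex hull of {y_t : t ≥ τ}: (a1) the KDE f is differentiable on S and its gradient is Lipschitz continuous on S, and (a2) f has the Łojasiewicz property on S, i.e. there exist ε > 0, c > 0 and θ ∈ [0,1) such that for all x', x ∈ S with ‖x' − x‖ < ε and f(x') − f(x) ≥ 0 one has ‖∇f(x)‖ ≥ c·(f(x') − f(x))^θ. Then the trajectory has finite length, Σ_{t=1}^∞ ‖y_{t+1} − y_t‖ < ∞, and (y_t)_{t∈ℕ} converges to a point ȳ with ∇f(ȳ) = 0 (a critical point of f). -/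

import Mathlib

open Set Filter Topology MeasureTheory
open scoped BigOperators RealInnerProductSpace

noncomputable section

/-- Euclidean space `ℝ^d`. -/
abbrev Euc (d : ℕ) := EuclideanSpace ℝ (Fin d)

/-- The convex subdifferential of a function `g` (viewed as a function on `[0,∞)`) at `u`. -/
def subdiffIci (g : ℝ → ℝ) (u : ℝ) : Set ℝ :=
  {c : ℝ | ∀ v ∈ Set.Ici (0:ℝ), g v - g u ≥ c * (v - u)}

/-- Assumption RS: the kernel `K` is bounded, continuous, non-negative, normalized, and
radially symmetric with profile `Khat`. -/
structure AssumptionRS (d : ℕ) (K : Euc d → ℝ) (Khat : ℝ → ℝ) : Prop where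
  bounded : ∃ M : ℝ, ∀ x, K x ≤ M
  cont : Continuous K
  nonneg : ∀ x, 0 ≤ K x
  normalized : ∫ x, K x = 1
  radial : ∀ x, K x = Khat (‖x‖ ^ 2 / 2)

/-- Assumption QM for the profile `Khat`, together with the selection `Kcheck`:
`Khat` is convex and non-increasing on `[0,∞)`, its right derivative at `0` exists as a real
number and equals `-(Kcheck 0)` (i.e. `Kcheck 0 = -Khat'(0+) > -∞`), and for every `u > 0`,
`-(Kcheck u)` belongs to the subdifferential of `Khat` at `u`. -/
structure AssumptionQM (Khat Kcheck : ℝ → ℝ) : Prop where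
  convexOn : ConvexOn ℝ (Set.Ici (0:ℝ)) Khat
  antitoneOn : AntitoneOn Khat (Set.Ici (0:ℝ))
  rderiv0 : Filter.Tendsto (fun v => (Khat v - Khat 0) / v)
      (nhdsWithin 0 (Set.Ioi 0)) (nhds (-(Kcheck 0)))
  subdiff : ∀ u : ℝ, 0 < u → -(Kcheck u) ∈ subdiffIci Khat u

/-- The kernel density estimate `f(y) = (1/(n hᵈ)) ∑ᵢ K((y - xᵢ)/h)`. -/
def KDE (d n : ℕ) (K : Euc d → ℝ) (x : Fin n → Euc d) (h : ℝ) (y : Euc d) : ℝ :=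
  (1 / ((n : ℝ) * h ^ d)) * ∑ i : Fin n, K (h⁻¹ • (y - x i))

/-- `f̌(y) = (1/(n hᵈ)) ∑ᵢ Ǩ(‖(y - xᵢ)/h‖²/2)`. -/
def fcheck (d n : ℕ) (Kcheck : ℝ → ℝ) (x : Fin n → Euc d) (h : ℝ) (y : Euc d) : ℝ :=
  (1 / ((n : ℝ) * h ^ d)) * ∑ i : Fin n, Kcheck (‖h⁻¹ • (y - x i)‖ ^ 2 / 2)

/-- The mean shift vector `m(y)`: zero if `f̌(y) = 0`, and otherwise
`m(y) = ∑ᵢ Ǩ(‖(y - xᵢ)/h‖²/2)(xᵢ - y) / ∑ᵢ Ǩ(‖(y - xᵢ)/h‖²/2)`. -/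
def msMap (d n : ℕ) (Kcheck : ℝ → ℝ) (x : Fin n → Euc d) (h : ℝ) (y : Euc d) : Euc d :=
  if fcheck d n Kcheck x h y = 0 then 0
  else (∑ i : Fin n, Kcheck (‖h⁻¹ • (y - x i)‖ ^ 2 / 2))⁻¹ •
    ∑ i : Fin n, Kcheck (‖h⁻¹ • (y - x i)‖ ^ 2 / 2) • (x i - y)

/-- `y` is a mean shift iteration sequence: `y (t+1) = y t + m (y t)` for all `t`. -/
def MSSeq (d n : ℕ) (Kcheck : ℝ → ℝ) (x : Fin n → Euc d) (h : ℝ) (y : ℕ → Euc d) : Prop :=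
  ∀ t : ℕ, y (t + 1) = y t + msMap d n Kcheck x h (y t)

/-- `f` has the Łojasiewicz property on the set `S`. -/
def LojasiewiczOn (d : ℕ) (f : Euc d → ℝ) (S : Set (Euc d)) : Prop :=
  ∃ ε > (0:ℝ), ∃ c > (0:ℝ), ∃ θ ∈ Set.Ico (0:ℝ) 1,
    ∀ x' ∈ S, ∀ x ∈ S, ‖x' - x‖ < ε → 0 ≤ f x' - f x →
      ‖gradient f x‖ ≥ c * (f x' - f x) ^ θ

/-- `f` satisfies the Łojasiewicz inequality at `ybar` with exponent `θ`, on the set `S`. -/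
def LojasiewiczAtWith (d : ℕ) (f : Euc d → ℝ) (S : Set (Euc d)) (ybar : Euc d) (θ : ℝ) : Prop :=
  ∃ ε > (0:ℝ), ∃ c > (0:ℝ),
    ∀ y ∈ S, ‖ybar - y‖ < ε → 0 ≤ f ybar - f y →
      ‖gradient f y‖ ≥ c * (f ybar - f y) ^ θ

/-!
Since the profile is convex, replacing it by its tangents at the squared distances from `y t` gives
a quadratic minorant of the density estimate `f` that touches it at `y t`; its maximizer is exactly
`y (t + 1)`. Hence `f (y (t + 1)) - f (y t)` is at least of order `‖y (t + 1) - y t‖ ^ 2`, and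
`gradient f (y t)` is a bounded multiple of `y (t + 1) - y t`. The constants are uniform and the
sequence is bounded because it stays in a superlevel set of `f` at a positive level.

With `r t = f p - f (y t)` for a cluster point `p`, the Łojasiewicz inequality and concavity of
`s ↦ s ^ (1 - θ)` bound `‖y (t + 1) - y t‖` by a multiple of
`r t ^ (1 - θ) - r (t + 1) ^ (1 - θ)` as long as `y t` is close to `p`. Summing up, a sequence that
comes close enough to `p` with `r` small can never leave, and its length is finite. The quadratic
minorants at `y t` then converge to one at the limit with slope `0`.
-/

section Descent

variable {X : Type*} [PseudoMetricSpace X] {y : ℕ → X} {p : X} {ε : ℝ}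

/-- While the sequence is in the ball, the decrease of `φ` pays for the path length; `φ 0` is too
small to pay for leaving the ball. -/
lemma sum_dist_le_of_local_descent {φ : ℕ → ℝ} (hφ : ∀ t, 0 ≤ φ t)
    (hstep : ∀ t, dist (y t) p < ε → dist (y t) (y (t + 1)) ≤ φ t - φ (t + 1))
    (h0 : dist (y 0) p + φ 0 < ε) (k : ℕ) :
    ∑ t ∈ Finset.range k, dist (y t) (y (t + 1)) ≤ φ 0 - φ k := by
  induction k with
  | zero => simp
  | succ k ih =>
    have hball : dist (y k) p < ε := by
      linarith [dist_triangle_left (y k) p (y 0), dist_le_range_sum_dist y k, hφ k]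
    rw [Finset.sum_range_succ]
    linarith [hstep k hball]

lemma summable_dist_of_local_descent {φ : ℕ → ℝ} (hp : MapClusterPt p atTop y)
    (hφ : ∀ t, 0 ≤ φ t) (hφ0 : Tendsto φ atTop (𝓝 0)) (hε : 0 < ε)
    (hstep : ∀ᶠ t in atTop, dist (y t) p < ε → dist (y t) (y (t + 1)) ≤ φ t - φ (t + 1)) :
    Summable fun t => dist (y t) (y (t + 1)) := by
  have hnear : ∃ᶠ t in atTop, dist (y t) p < ε / 2 :=
    hp.frequently (Metric.ball_mem_nhds p (half_pos hε))
  have hsmall : ∀ᶠ t in atTop, φ t < ε / 2 := hφ0.eventually_lt_const (half_pos hε)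
  obtain ⟨T, hT, hφT, hstepT⟩ :=
    (hnear.and_eventually (hsmall.and (eventually_forall_ge_atTop.2 hstep))).exists
  rw [← summable_nat_add_iff T]
  refine summable_of_sum_range_le (c := φ T) (fun _ => dist_nonneg) fun k => ?_
  have hsum := sum_dist_le_of_local_descent (y := fun t => y (t + T)) (φ := fun t => φ (t + T))
    (fun t => hφ _) (fun t ht => by simpa only [add_right_comm] using hstepT (t + T) (by lia) ht)
    (by simpa only [zero_add] using by linarith) k
  simp only [zero_add, add_right_comm _ 1 T] at hsum ⊢
  linarith [hφ (k + T)]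

/-- Weighted AM-GM, i.e. the tangent line inequality for the concave function `s ↦ s ^ (1 - θ)`,
multiplied by `r ^ θ` so as to include `r = 0`. -/
lemma one_sub_mul_sub_le_rpow_mul {r r' θ : ℝ} (hr : 0 ≤ r) (hr' : 0 ≤ r') (hθ0 : 0 ≤ θ)
    (hθ1 : θ ≤ 1) : (1 - θ) * (r - r') ≤ r ^ θ * (r ^ (1 - θ) - r' ^ (1 - θ)) := by
  have hamgm := Real.geom_mean_le_arith_mean2_weighted hθ0 (sub_nonneg.2 hθ1) hr hr'
    (add_sub_cancel θ 1)
  have hmul : r ^ θ * r ^ (1 - θ) = r := by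
    rw [← Real.rpow_add_of_nonneg hr hθ0 (sub_nonneg.2 hθ1), add_sub_cancel, Real.rpow_one]
  rw [mul_sub (r ^ θ), hmul]
  linarith

lemma mul_le_rpow_sub_rpow_of_lojasiewicz {r r' δ a c θ : ℝ} (hr' : 0 ≤ r') (hδ : 0 ≤ δ)
    (ha : 0 < a) (hc : 0 < c) (hθ : θ ∈ Ico (0 : ℝ) 1) (hdesc : a * δ ^ 2 ≤ r - r')
    (hloj : c * r ^ θ ≤ δ) : (1 - θ) * a * c * δ ≤ r ^ (1 - θ) - r' ^ (1 - θ) := by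
  have hθ1 : 0 < 1 - θ := sub_pos.2 hθ.2
  have hle : r' ≤ r := sub_nonneg.1 (le_trans (by positivity) hdesc)
  have hD : 0 ≤ r ^ (1 - θ) - r' ^ (1 - θ) := sub_nonneg.2 (Real.rpow_le_rpow hr' hle hθ1.le)
  rcases hδ.eq_or_lt with rfl | hδ
  · simpa using hD
  · refine le_of_mul_le_mul_right ?_ hδ
    calc (1 - θ) * a * c * δ * δ = c * ((1 - θ) * (a * δ ^ 2)) := by ring
      _ ≤ c * ((1 - θ) * (r - r')) := by gcongr
      _ ≤ c * (r ^ θ * (r ^ (1 - θ) - r' ^ (1 - θ))) := by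
        gcongr c * ?_
        exact one_sub_mul_sub_le_rpow_mul (hr'.trans hle) hr' hθ.1 hθ.2.le
      _ = c * r ^ θ * (r ^ (1 - θ) - r' ^ (1 - θ)) := by ring
      _ ≤ δ * (r ^ (1 - θ) - r' ^ (1 - θ)) := by gcongr
      _ = (r ^ (1 - θ) - r' ^ (1 - θ)) * δ := mul_comm _ _

theorem summable_dist_of_lojasiewicz {r : ℕ → ℝ} {a c θ : ℝ} (hp : MapClusterPt p atTop y)
    (hr : ∀ t, 0 ≤ r t) (hr0 : Tendsto r atTop (𝓝 0)) (ha : 0 < a) (hc : 0 < c)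
    (hθ : θ ∈ Ico (0 : ℝ) 1) (hε : 0 < ε)
    (hdesc : ∀ᶠ t in atTop, a * dist (y t) (y (t + 1)) ^ 2 ≤ r t - r (t + 1))
    (hloj : ∀ᶠ t in atTop, dist (y t) p < ε → c * r t ^ θ ≤ dist (y t) (y (t + 1))) :
    Summable fun t => dist (y t) (y (t + 1)) := by
  have hθ1 : 0 < 1 - θ := sub_pos.2 hθ.2
  have hκ : 0 < (1 - θ) * a * c := by positivity
  refine summable_dist_of_local_descent (φ := fun t => r t ^ (1 - θ) / ((1 - θ) * a * c)) hp
    (fun t => div_nonneg (Real.rpow_nonneg (hr t) _) hκ.le) ?_ hε ?_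
  · simpa [Real.zero_rpow hθ1.ne'] using
      (hr0.rpow_const (p := 1 - θ) (Or.inr hθ1.le)).div_const ((1 - θ) * a * c)
  · filter_upwards [hdesc, hloj] with t hdesct hlojt hball
    rw [← sub_div, le_div_iff₀ hκ, mul_comm]
    exact mul_le_rpow_sub_rpow_of_lojasiewicz (hr _) dist_nonneg ha hc hθ hdesct (hlojt hball)

lemma tendsto_of_mapClusterPt_of_summable_dist (hp : MapClusterPt p atTop y)
    (hsum : Summable fun t => dist (y t) (y (t + 1))) : Tendsto y atTop (𝓝 p) :=
  le_nhds_of_cauchy_adhp (cauchySeq_of_summable_dist hsum) hp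

lemma tendsto_atTop_of_monotone_of_mapClusterPt {α : Type*} [ConditionallyCompleteLinearOrder α]
    [TopologicalSpace α] [OrderTopology α] [NoMaxOrder α] [FirstCountableTopology α] {u : ℕ → α}
    {l : α} (hu : Monotone u) (hl : MapClusterPt l atTop u) : Tendsto u atTop (𝓝 l) :=
  have ⟨_, hψ, hlim⟩ := hl.tendsto_subseq
  (tendsto_iff_tendsto_subseq_of_monotone hu hψ.tendsto_atTop).2 hlim

end Descent

section QuadMinorant

variable {E : Type*} [NormedAddCommGroup E] [InnerProductSpace ℝ E]

lemma norm_inv_smul_add_sub_sq (h : ℝ) (y v z : E) :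
    ‖h⁻¹ • (y + v - z)‖ ^ 2 =
      ‖h⁻¹ • (y - z)‖ ^ 2 + (h ^ 2)⁻¹ * (‖v‖ ^ 2 - 2 * ⟪z - y, v⟫) := by
  rw [show y + v - z = v - (z - y) by abel, norm_smul, norm_smul, norm_sub_rev y z, mul_pow,
    mul_pow, norm_sub_sq_real, real_inner_comm, Real.norm_eq_abs, sq_abs, inv_pow]
  ring

/-- `f` is minorized on the whole space by the quadratic with slope `g` at `y` and Hessian `-q` that
touches `f` at `y`. It is what one step of the mean shift iteration maximizes. -/
def HasQuadMinorantAt (f : E → ℝ) (q : ℝ) (g y : E) : Prop :=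
  ∀ v, f y + ⟪g, v⟫ - q / 2 * ‖v‖ ^ 2 ≤ f (y + v)

namespace HasQuadMinorantAt

variable {f : E → ℝ} {q : ℝ} {g y v : E}

lemma mono_curvature {q' : ℝ} (hf : HasQuadMinorantAt f q g y) (hq : q ≤ q') :
    HasQuadMinorantAt f q' g y := fun v => by
  have : q / 2 * ‖v‖ ^ 2 ≤ q' / 2 * ‖v‖ ^ 2 := by gcongr
  linarith [hf v]

lemma half_mul_sq_norm_le (hf : HasQuadMinorantAt f q (q • v) y) :
    q / 2 * ‖v‖ ^ 2 ≤ f (y + v) - f y := by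
  have := hf v
  rw [real_inner_smul_left, real_inner_self_eq_norm_sq] at this
  linarith

lemma of_tendsto {ι : Type*} {l : Filter ι} [NeBot l] {u w : ι → E} (hf : Continuous f)
    (hu : Tendsto u l (𝓝 y)) (hw : Tendsto w l (𝓝 g))
    (hmin : ∀ᶠ i in l, HasQuadMinorantAt f q (w i) (u i)) : HasQuadMinorantAt f q g y := fun v =>
  le_of_tendsto_of_tendsto
    ((((hf.tendsto y).comp hu).add (hw.inner tendsto_const_nhds)).sub_const _)
    ((hf.tendsto (y + v)).comp (hu.add_const v)) (hmin.mono fun _ hi => hi v)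

lemma gradient_eq [CompleteSpace E] (hmin : HasQuadMinorantAt f q g y)
    (hf : DifferentiableAt ℝ f y) : gradient f y = g := by
  have hinner : HasFDerivAt (fun z => ⟪g, z - y⟫) (innerSL ℝ g) y :=
    (innerSL ℝ g).hasFDerivAt.comp y ((hasFDerivAt_id y).sub_const y)
  have hsq : HasFDerivAt (fun z => q / 2 * ‖z - y‖ ^ 2) (0 : E →L[ℝ] ℝ) y := by
    simpa using (((hasFDerivAt_id (𝕜 := ℝ) y).sub_const y).norm_sq).const_mul (q / 2)
  have hgap := (hf.hasGradientAt.hasFDerivAt.sub hinner).add hsq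
  have hloc : IsLocalMin (fun z => f z - ⟪g, z - y⟫ + q / 2 * ‖z - y‖ ^ 2) y :=
    Eventually.of_forall fun z => by
      have := hmin (z - y)
      rw [add_sub_cancel] at this
      simp only [sub_self, inner_zero_right, norm_zero]
      linarith
  have hzero := hloc.hasFDerivAt_eq_zero hgap
  refine ext_inner_right ℝ fun v => sub_eq_zero.1 ?_
  simpa using DFunLike.congr_fun hzero v

end HasQuadMinorantAt

section MinorizeMaximize

variable {f : E → ℝ} {y : ℕ → E} {p : E} {q : ℕ → ℝ} {μ M : ℝ}

lemma monotone_comp_of_hasQuadMinorantAt (hq : ∀ t, 0 ≤ q t)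
    (hmin : ∀ t, HasQuadMinorantAt f (q t) (q t • (y (t + 1) - y t)) (y t)) :
    Monotone (f ∘ y) :=
  monotone_nat_of_le_succ fun t => by
    have := (hmin t).half_mul_sq_norm_le
    rw [add_sub_cancel] at this
    exact sub_nonneg.1 (le_trans (by have := hq t; positivity) this)

/-- `y (t + 1)` is the maximizer of a quadratic minorant of `f` at `y t`, so that
`gradient f (y t) = q t • (y (t + 1) - y t)`. -/
theorem summable_dist_of_hasQuadMinorantAt [CompleteSpace E] {ε c θ : ℝ}
    (hp : MapClusterPt p atTop y) (hcont : ContinuousAt f p)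
    (hdiff : ∀ᶠ t in atTop, DifferentiableAt ℝ f (y t))
    (hμ : 0 < μ) (hqμ : ∀ᶠ t in atTop, μ ≤ q t) (hq : ∀ t, q t ∈ Icc 0 M)
    (hmin : ∀ t, HasQuadMinorantAt f (q t) (q t • (y (t + 1) - y t)) (y t))
    (hε : 0 < ε) (hc : 0 < c) (hθ : θ ∈ Ico (0 : ℝ) 1)
    (hloj : ∀ᶠ t in atTop, dist (y t) p < ε → 0 ≤ f p - f (y t) →
      c * (f p - f (y t)) ^ θ ≤ ‖gradient f (y t)‖) :
    Summable fun t => dist (y t) (y (t + 1)) := by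
  have hmono : Monotone (f ∘ y) := monotone_comp_of_hasQuadMinorantAt (fun t => (hq t).1) hmin
  have hlim : Tendsto (f ∘ y) atTop (𝓝 (f p)) :=
    tendsto_atTop_of_monotone_of_mapClusterPt hmono (hp.continuousAt_comp hcont)
  have hr : ∀ t, 0 ≤ f p - f (y t) := fun t => sub_nonneg.2 (hmono.ge_of_tendsto hlim t)
  have hM : 0 < M := have ⟨t, ht⟩ := hqμ.exists; hμ.trans_le (ht.trans (hq t).2)
  refine summable_dist_of_lojasiewicz (r := fun t => f p - f (y t)) (a := μ / 2) (c := c / M)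
    hp hr (by simpa using hlim.const_sub (f p)) (half_pos hμ) (div_pos hc hM) hθ hε ?_ ?_
  · filter_upwards [hqμ] with t ht
    have hasc := (hmin t).half_mul_sq_norm_le
    rw [add_sub_cancel] at hasc
    calc μ / 2 * dist (y t) (y (t + 1)) ^ 2 ≤ q t / 2 * ‖y (t + 1) - y t‖ ^ 2 := by
          rw [dist_comm, dist_eq_norm]
          gcongr
      _ ≤ f p - f (y t) - (f p - f (y (t + 1))) := by linarith
  · filter_upwards [hdiff, hloj] with t hdifft hlojt hball
    rw [div_mul_eq_mul_div, div_le_iff₀' hM]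
    calc c * (f p - f (y t)) ^ θ ≤ ‖gradient f (y t)‖ := hlojt hball (hr t)
      _ = q t * dist (y t) (y (t + 1)) := by
        rw [(hmin t).gradient_eq hdifft, norm_smul, Real.norm_of_nonneg (hq t).1, dist_comm,
          dist_eq_norm]
      _ ≤ M * dist (y t) (y (t + 1)) := by gcongr; exact (hq t).2

lemma gradient_eq_zero_of_hasQuadMinorantAt [CompleteSpace E] (hy : Tendsto y atTop (𝓝 p))
    (hf : Continuous f) (hdiff : DifferentiableAt ℝ f p) (hq : ∀ t, q t ∈ Icc 0 M)
    (hmin : ∀ t, HasQuadMinorantAt f (q t) (q t • (y (t + 1) - y t)) (y t)) :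
    gradient f p = 0 := by
  have hstep : Tendsto (fun t => y (t + 1) - y t) atTop (𝓝 0) := by
    simpa using (hy.comp (tendsto_add_atTop_nat 1)).sub hy
  have hslope : Tendsto (fun t => q t • (y (t + 1) - y t)) atTop (𝓝 0) := by
    refine squeeze_zero_norm (fun t => ?_) (by simpa using hstep.norm.const_mul M)
    rw [norm_smul, Real.norm_of_nonneg (hq t).1]
    gcongr
    exact (hq t).2
  have hminp : HasQuadMinorantAt f M 0 p :=
    .of_tendsto hf hy hslope (.of_forall fun t => (hmin t).mono_curvature (hq t).2)
  exact hminp.gradient_eq hdiff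

end MinorizeMaximize

end QuadMinorant

namespace AssumptionQM

variable {Khat Kcheck : ℝ → ℝ} {u v : ℝ}

lemma neg_mem_subdiffIci (hQM : AssumptionQM Khat Kcheck) (hu : 0 ≤ u) :
    -Kcheck u ∈ subdiffIci Khat u := by
  rcases hu.eq_or_lt with rfl | hu
  · intro v hv
    rcases (mem_Ici.1 hv).eq_or_lt with rfl | hv
    · simp
    have hslope : -Kcheck 0 ≤ (Khat v - Khat 0) / v := by
      refine le_of_tendsto hQM.rderiv0 ?_
      filter_upwards [Ioo_mem_nhdsGT hv] with w hw
      simpa using hQM.convexOn.secant_mono self_mem_Ici (mem_Ici.2 hw.1.le) (mem_Ici.2 hv.le)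
        hw.1.ne' hv.ne' hw.2.le
    rwa [sub_zero, ge_iff_le, ← le_div_iff₀ hv]
  · exact hQM.subdiff u hu

lemma sub_mul_le (hQM : AssumptionQM Khat Kcheck) (hu : 0 ≤ u) (hv : 0 ≤ v) :
    Khat u - Kcheck u * (v - u) ≤ Khat v := by
  linarith [hQM.neg_mem_subdiffIci hu v hv]

lemma antitoneOn_Kcheck (hQM : AssumptionQM Khat Kcheck) : AntitoneOn Kcheck (Ici 0) := by
  intro u hu v hv huv
  rcases huv.eq_or_lt with rfl | huv
  · rfl
  · refine le_of_mul_le_mul_right ?_ (sub_pos.2 huv)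
    linarith [hQM.sub_mul_le hu hv, hQM.sub_mul_le hv hu]

lemma Kcheck_nonneg (hQM : AssumptionQM Khat Kcheck) (hu : 0 ≤ u) : 0 ≤ Kcheck u := by
  have hu1 : 0 ≤ u + 1 := by linarith
  linarith [hQM.sub_mul_le hu hu1, hQM.antitoneOn hu hu1 (by linarith)]

end AssumptionQM

lemma exists_lt_of_integrable {α : Type*} [MeasurableSpace α] {μ : Measure α} {f : α → ℝ} {a : ℝ}
    (hf : Integrable f μ) (hμ : μ univ = ⊤) (ha : 0 < a) : ∃ x, f x < a := by
  by_contra! hle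
  have hfin := hf.measure_ge_lt_top ha
  rw [eq_univ_of_forall (s := {x | a ≤ f x}) hle] at hfin
  exact hfin.ne hμ

lemma AssumptionRS.exists_profile_lt {d : ℕ} (hd : 0 < d) {K : Euc d → ℝ} {Khat : ℝ → ℝ} {a : ℝ}
    (hRS : AssumptionRS d K Khat) (ha : 0 < a) : ∃ v, 0 ≤ v ∧ Khat v < a := by
  have : Nonempty (Fin d) := ⟨⟨0, hd⟩⟩
  have hint : Integrable K := .of_integral_ne_zero (by simp [hRS.normalized])
  obtain ⟨z, hz⟩ := exists_lt_of_integrable hint (measure_univ_of_isAddLeftInvariant _) ha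
  exact ⟨‖z‖ ^ 2 / 2, by positivity, hRS.radial z ▸ hz⟩

section MeanShift

variable {d n : ℕ} {K : Euc d → ℝ} {Khat Kcheck : ℝ → ℝ} {x : Fin n → Euc d} {h b : ℝ} {y : Euc d}

lemma continuous_KDE (hK : Continuous K) : Continuous (KDE d n K x h) := by
  unfold KDE
  fun_prop

lemma KDE_nonneg (hK : ∀ z, 0 ≤ K z) (hh : 0 ≤ h) (y : Euc d) : 0 ≤ KDE d n K x h y :=
  mul_nonneg (by positivity) (Finset.sum_nonneg fun _ _ => hK _)

lemma exists_le_kernel_of_le_KDE (hn : 0 < n) (hh : 0 < h) (hy : b ≤ KDE d n K x h y) :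
    ∃ i, b * h ^ d ≤ K (h⁻¹ • (y - x i)) := by
  have : Nonempty (Fin n) := ⟨⟨0, hn⟩⟩
  have hsum : ∑ _i : Fin n, b * h ^ d ≤ ∑ i, K (h⁻¹ • (y - x i)) := by
    rw [KDE, one_div, ← div_eq_inv_mul, le_div_iff₀ (by positivity)] at hy
    simp only [Finset.sum_const, Finset.card_univ, Fintype.card_fin, nsmul_eq_mul]
    linarith
  obtain ⟨i, -, hi⟩ := Finset.exists_le_of_sum_le Finset.univ_nonempty hsum
  exact ⟨i, hi⟩

lemma isBounded_superlevel_KDE (hd : 0 < d) (hn : 0 < n) (hRS : AssumptionRS d K Khat)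
    (hanti : AntitoneOn Khat (Ici 0)) (hh : 0 < h) (hb : 0 < b) :
    Bornology.IsBounded {y | b ≤ KDE d n K x h y} := by
  obtain ⟨v, hv, hKv⟩ := hRS.exists_profile_lt hd (a := b * h ^ d) (by positivity)
  refine (Bornology.isBounded_iUnion.2 fun i : Fin n =>
    Metric.isBounded_closedBall (x := x i) (r := h * √(2 * v))).subset fun y hy => ?_
  obtain ⟨i, hi⟩ := exists_le_kernel_of_le_KDE hn hh hy
  rw [hRS.radial] at hi
  have huv : ‖h⁻¹ • (y - x i)‖ ^ 2 / 2 < v :=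
    hanti.reflect_lt hv (mem_Ici.2 (by positivity)) (hKv.trans_le hi)
  have hnorm : h⁻¹ * ‖y - x i‖ ≤ √(2 * v) := by
    rw [norm_smul, norm_inv, Real.norm_of_nonneg hh.le] at huv
    exact Real.le_sqrt_of_sq_le (by linarith)
  exact mem_iUnion.2 ⟨i, mem_closedBall_iff_norm.2 ((inv_mul_le_iff₀ hh).1 hnorm)⟩

lemma fcheck_mem_Icc (hQM : AssumptionQM Khat Kcheck) (hh : 0 ≤ h) (y : Euc d) :
    fcheck d n Kcheck x h y ∈ Icc 0 (1 / (n * h ^ d) * (n * Kcheck 0)) := by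
  refine ⟨mul_nonneg (by positivity)
    (Finset.sum_nonneg fun i _ => hQM.Kcheck_nonneg (by positivity)), ?_⟩
  refine mul_le_mul_of_nonneg_left ?_ (by positivity)
  calc ∑ i, Kcheck (‖h⁻¹ • (y - x i)‖ ^ 2 / 2) ≤ ∑ _i : Fin n, Kcheck 0 :=
        Finset.sum_le_sum fun i _ =>
          hQM.antitoneOn_Kcheck self_mem_Ici (mem_Ici.2 (by positivity)) (by positivity)
    _ = n * Kcheck 0 := by simp

lemma curvature_mem_Icc (hQM : AssumptionQM Khat Kcheck) (hh : 0 ≤ h) (y : Euc d) :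
    (h ^ 2)⁻¹ * fcheck d n Kcheck x h y ∈
      Icc 0 ((h ^ 2)⁻¹ * (1 / (n * h ^ d) * (n * Kcheck 0))) := by
  obtain ⟨h0, hM⟩ := fcheck_mem_Icc (x := x) hQM hh y
  exact ⟨by positivity, by gcongr⟩

lemma exists_pos_le_fcheck (hd : 0 < d) (hn : 0 < n) (hRS : AssumptionRS d K Khat)
    (hQM : AssumptionQM Khat Kcheck) (hh : 0 < h) (hb : 0 < b) :
    ∃ μ > 0, ∀ y, b ≤ KDE d n K x h y → μ ≤ fcheck d n Kcheck x h y := by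
  obtain ⟨v, hv, hKv⟩ := hRS.exists_profile_lt hd (a := b * h ^ d) (by positivity)
  -- The `+ 1` avoids a division by zero when `v = 0`.
  refine ⟨1 / (n * h ^ d) * ((b * h ^ d - Khat v) / (v + 1)),
    mul_pos (by positivity) (div_pos (sub_pos.2 hKv) (by positivity)), fun y hy => ?_⟩
  refine mul_le_mul_of_nonneg_left ?_ (by positivity)
  obtain ⟨i, hi⟩ := exists_le_kernel_of_le_KDE hn hh hy
  rw [hRS.radial] at hi
  set u := ‖h⁻¹ • (y - x i)‖ ^ 2 / 2
  have hu : 0 ≤ u := by positivity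
  have hslope : (b * h ^ d - Khat v) / (v + 1) ≤ Kcheck u := by
    rw [div_le_iff₀ (by positivity)]
    calc b * h ^ d - Khat v ≤ Kcheck u * (v - u) := by linarith [hQM.sub_mul_le hu hv]
      _ ≤ Kcheck u * (v + 1) := by
        gcongr
        exacts [hQM.Kcheck_nonneg hu, by linarith]
  exact hslope.trans (Finset.single_le_sum (f := fun i => Kcheck (‖h⁻¹ • (y - x i)‖ ^ 2 / 2))
    (fun j _ => hQM.Kcheck_nonneg (by positivity)) (Finset.mem_univ i))

lemma fcheck_smul_msMap (hQM : AssumptionQM Khat Kcheck) (y : Euc d) :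
    fcheck d n Kcheck x h y • msMap d n Kcheck x h y = (1 / ((n : ℝ) * h ^ d)) •
      ∑ i : Fin n, Kcheck (‖h⁻¹ • (y - x i)‖ ^ 2 / 2) • (x i - y) := by
  unfold msMap
  split_ifs with h0
  · rw [fcheck, mul_eq_zero] at h0
    rcases h0 with h0 | h0
    · simp [h0]
    · rw [Finset.sum_eq_zero_iff_of_nonneg fun i _ => hQM.Kcheck_nonneg (by positivity)] at h0
      rw [Finset.sum_eq_zero fun i hi => by rw [h0 i hi, zero_smul]]
      simp
  · rw [smul_smul, fcheck, mul_assoc, mul_inv_cancel₀ (right_ne_zero_of_mul h0), mul_one]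

/-- The kernel is a convex function of the squared distance, so its tangent in that variable is a
quadratic minorant in the original variable. -/
lemma hasQuadMinorantAt_KDE (hK : ∀ z, K z = Khat (‖z‖ ^ 2 / 2))
    (hQM : AssumptionQM Khat Kcheck) (hh : 0 ≤ h) (y : Euc d) :
    HasQuadMinorantAt (KDE d n K x h) ((h ^ 2)⁻¹ * fcheck d n Kcheck x h y)
      (((h ^ 2)⁻¹ * fcheck d n Kcheck x h y) • msMap d n Kcheck x h y) y := by
  intro v
  have hterm : ∀ i, K (h⁻¹ • (y - x i)) +
      (h ^ 2)⁻¹ * ⟪Kcheck (‖h⁻¹ • (y - x i)‖ ^ 2 / 2) • (x i - y), v⟫ -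
      (h ^ 2)⁻¹ * Kcheck (‖h⁻¹ • (y - x i)‖ ^ 2 / 2) / 2 * ‖v‖ ^ 2 ≤
      K (h⁻¹ • (y + v - x i)) := fun i => by
    have htangent := hQM.sub_mul_le (u := ‖h⁻¹ • (y - x i)‖ ^ 2 / 2)
      (v := ‖h⁻¹ • (y + v - x i)‖ ^ 2 / 2) (by positivity) (by positivity)
    rw [hK, hK, real_inner_smul_left]
    refine le_trans (le_of_eq ?_) htangent
    rw [norm_inv_smul_add_sub_sq]
    ring
  refine le_trans (le_of_eq ?_) (mul_le_mul_of_nonneg_left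
    (Finset.sum_le_sum fun i (_ : i ∈ Finset.univ) => hterm i)
    (show 0 ≤ 1 / ((n : ℝ) * h ^ d) by positivity))
  rw [mul_smul, fcheck_smul_msMap hQM, real_inner_smul_left, real_inner_smul_left, sum_inner,
    Finset.sum_sub_distrib, Finset.sum_add_distrib, ← Finset.mul_sum, ← Finset.sum_mul,
    ← Finset.sum_div, ← Finset.mul_sum]
  unfold KDE fcheck
  ring

lemma msMap_eq_zero_of_KDE_add_le (hK : ∀ z, K z = Khat (‖z‖ ^ 2 / 2))
    (hQM : AssumptionQM Khat Kcheck) (hh : 0 < h)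
    (hy : KDE d n K x h (y + msMap d n Kcheck x h y) ≤ KDE d n K x h y) :
    msMap d n Kcheck x h y = 0 := by
  by_cases h0 : fcheck d n Kcheck x h y = 0
  · rw [msMap, if_pos h0]
  · have hpos : 0 < fcheck d n Kcheck x h y :=
      (fcheck_mem_Icc hQM hh.le y).1.lt_of_ne' h0
    have hasc := (hasQuadMinorantAt_KDE (x := x) hK hQM hh.le y).half_mul_sq_norm_le
    by_contra hne
    have : 0 < ‖msMap d n Kcheck x h y‖ := norm_pos_iff.2 hne
    linarith [show 0 < (h ^ 2)⁻¹ * fcheck d n Kcheck x h y / 2 * ‖msMap d n Kcheck x h y‖ ^ 2 by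
      positivity]

end MeanShift

section Convergence

variable {d n : ℕ} {K : Euc d → ℝ} {Khat Kcheck : ℝ → ℝ} {x : Fin n → Euc d} {h : ℝ}
  {y : ℕ → Euc d}

lemma MSSeq.hasQuadMinorantAt (hy : MSSeq d n Kcheck x h y)
    (hK : ∀ z, K z = Khat (‖z‖ ^ 2 / 2)) (hQM : AssumptionQM Khat Kcheck) (hh : 0 ≤ h) (t : ℕ) :
    HasQuadMinorantAt (KDE d n K x h) ((h ^ 2)⁻¹ * fcheck d n Kcheck x h (y t))
      (((h ^ 2)⁻¹ * fcheck d n Kcheck x h (y t)) • (y (t + 1) - y t)) (y t) := by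
  rw [hy t, add_sub_cancel_left]
  exact hasQuadMinorantAt_KDE hK hQM hh (y t)

lemma MSSeq.eq_of_forall_KDE_succ_le (hy : MSSeq d n Kcheck x h y)
    (hK : ∀ z, K z = Khat (‖z‖ ^ 2 / 2)) (hQM : AssumptionQM Khat Kcheck) (hh : 0 < h)
    (hle : ∀ t, KDE d n K x h (y (t + 1)) ≤ KDE d n K x h (y t)) (t : ℕ) : y t = y 0 := by
  induction t with
  | zero => rfl
  | succ t ih =>
    rw [hy t, msMap_eq_zero_of_KDE_add_le hK hQM hh (by rw [← hy t]; exact hle t), add_zero, ih]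

lemma MSSeq.monotone_KDE (hy : MSSeq d n Kcheck x h y)
    (hK : ∀ z, K z = Khat (‖z‖ ^ 2 / 2)) (hQM : AssumptionQM Khat Kcheck) (hh : 0 ≤ h) :
    Monotone (KDE d n K x h ∘ y) :=
  monotone_comp_of_hasQuadMinorantAt
    (fun t => mul_nonneg (by positivity) (fcheck_mem_Icc hQM hh (y t)).1)
    (hy.hasQuadMinorantAt hK hQM hh)

lemma MSSeq.exists_mapClusterPt (hy : MSSeq d n Kcheck x h y) (hd : 0 < d) (hn : 0 < n)
    (hRS : AssumptionRS d K Khat) (hQM : AssumptionQM Khat Kcheck) (hh : 0 < h) {T : ℕ}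
    (hT : 0 < KDE d n K x h (y T)) : ∃ p, MapClusterPt p atTop y := by
  have hlevel : ∀ᶠ t in atTop, y t ∈ {z | KDE d n K x h (y T) ≤ KDE d n K x h z} :=
    (eventually_ge_atTop T).mono fun _ ht => hy.monotone_KDE hRS.radial hQM hh.le ht
  have hbdd := isBounded_superlevel_KDE (x := x) hd hn hRS hQM.antitoneOn hh hT
  obtain ⟨p, -, hp⟩ := hbdd.isCompact_closure.exists_mapClusterPt
    (tendsto_principal.2 (hlevel.mono fun _ ht => subset_closure ht))
  exact ⟨p, hp⟩

/-- Along a mean shift sequence that reaches positive density, the quadratic minorants of the KDE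
are uniformly strongly concave. -/
theorem MSSeq.summable_dist (hy : MSSeq d n Kcheck x h y) (hd : 0 < d) (hn : 0 < n)
    (hRS : AssumptionRS d K Khat) (hQM : AssumptionQM Khat Kcheck) (hh : 0 < h) {T : ℕ}
    (hT : 0 < KDE d n K x h (y T)) {S : Set (Euc d)} {p : Euc d} {θ : ℝ}
    (hyS : ∀ᶠ t in atTop, y t ∈ S) (hdiff : ∀ z ∈ S, DifferentiableAt ℝ (KDE d n K x h) z)
    (hp : MapClusterPt p atTop y) (hθ : θ ∈ Ico (0 : ℝ) 1)
    (hloj : LojasiewiczAtWith d (KDE d n K x h) S p θ) :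
    Summable fun t => dist (y t) (y (t + 1)) := by
  obtain ⟨μ, hμ, hlow⟩ := exists_pos_le_fcheck (x := x) hd hn hRS hQM hh hT
  obtain ⟨ε, hε, c, hc, hloj⟩ := hloj
  refine summable_dist_of_hasQuadMinorantAt hp (continuous_KDE hRS.cont).continuousAt
    (hyS.mono fun t => hdiff (y t)) (μ := (h ^ 2)⁻¹ * μ) (by positivity) ?_
    (fun t => curvature_mem_Icc hQM hh.le (y t)) (hy.hasQuadMinorantAt hRS.radial hQM hh.le)
    hε hc hθ ?_
  · filter_upwards [eventually_ge_atTop T] with t ht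
    gcongr
    exact hlow _ (hy.monotone_KDE hRS.radial hQM hh.le ht)
  · filter_upwards [hyS] with t ht hball
    exact hloj (y t) ht (by rwa [← dist_eq_norm, dist_comm])

end Convergence

theorem ms_convergence_guarantee_general
    (d n : ℕ) (hd : 0 < d) (hn : 0 < n)
    (K : Euc d → ℝ) (Khat Kcheck : ℝ → ℝ)
    (hRS : AssumptionRS d K Khat) (hQM : AssumptionQM Khat Kcheck)
    (x : Fin n → Euc d) (h : ℝ) (hh : 0 < h)
    (y : ℕ → Euc d) (hy : MSSeq d n Kcheck x h y)
    (S : Set (Euc d)) (hS : IsClosed S) (hyS : ∀ᶠ t in atTop, y t ∈ S)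
    (hdiff : ∀ z ∈ S, DifferentiableAt ℝ (KDE d n K x h) z)
    (hloj : ∀ z ∈ S, ∃ θ ∈ Ico (0 : ℝ) 1, LojasiewiczAtWith d (KDE d n K x h) S z θ) :
    (Summable fun t : ℕ => ‖y (t + 1) - y t‖) ∧
    ∃ ybar : Euc d, Tendsto y atTop (𝓝 ybar) ∧ gradient (KDE d n K x h) ybar = 0 := by
  have hmin := hy.hasQuadMinorantAt hRS.radial hQM hh.le
  suffices hlim : ∃ p, (Summable fun t => dist (y t) (y (t + 1))) ∧ Tendsto y atTop (𝓝 p) by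
    obtain ⟨p, hsum, hp⟩ := hlim
    refine ⟨by simpa only [dist_eq_norm'] using hsum, p, hp, ?_⟩
    exact gradient_eq_zero_of_hasQuadMinorantAt hp (continuous_KDE hRS.cont)
      (hdiff p (hS.mem_of_tendsto hp hyS)) (fun t => curvature_mem_Icc hQM hh.le (y t)) hmin
  by_cases hpos : ∃ T, 0 < KDE d n K x h (y T)
  · obtain ⟨T, hT⟩ := hpos
    obtain ⟨p, hp⟩ := hy.exists_mapClusterPt hd hn hRS hQM hh hT
    have hpS : p ∈ S := hS.mem_of_mapClusterPt hp hyS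
    obtain ⟨θ, hθ, hlojp⟩ := hloj p hpS
    have hsum := hy.summable_dist hd hn hRS hQM hh hT hyS hdiff hp hθ hlojp
    exact ⟨p, hsum, tendsto_of_mapClusterPt_of_summable_dist hp hsum⟩
  · push Not at hpos
    have hconst : y = fun _ => y 0 := funext <| hy.eq_of_forall_KDE_succ_le hRS.radial hQM hh
      fun t => (hpos (t + 1)).trans (KDE_nonneg hRS.nonneg hh.le _)
    rw [hconst]
    exact ⟨y 0, by simp, tendsto_const_nhds⟩

/-- Convergence guarantee for MS: Under Assumptions RS and QM, starting from
`y 0` with `f (y 0) > 0`, if for some `τ`, with `S` the closure of the convex hull of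
`{y t : t ≥ τ}`, (a1) `f` is differentiable on `S` with Lipschitz-continuous gradient on `S`,
and (a2) `f` has the Łojasiewicz property on `S`, then the trajectory has finite length
(`∑ ‖y_{t+1} − y_t‖ < ∞`) and `(y t)` converges to a critical point of `f`. -/
theorem ms_convergence_guarantee
    (d n : ℕ) (hd : 0 < d) (hn : 0 < n)
    (K : Euc d → ℝ) (Khat Kcheck : ℝ → ℝ)
    (hRS : AssumptionRS d K Khat) (hQM : AssumptionQM Khat Kcheck)
    (x : Fin n → Euc d) (h : ℝ) (hh : 0 < h)
    (y : ℕ → Euc d) (hy : MSSeq d n Kcheck x h y)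
    (hy0 : 0 < KDE d n K x h (y 0))
    (τ : ℕ) (S : Set (Euc d))
    (hS : S = closure (convexHull ℝ {z : Euc d | ∃ t : ℕ, τ ≤ t ∧ z = y t}))
    (ha1diff : ∀ z ∈ S, DifferentiableAt ℝ (KDE d n K x h) z)
    (ha1lip : ∃ L : NNReal, LipschitzOnWith L (gradient (KDE d n K x h)) S)
    (ha2 : LojasiewiczOn d (KDE d n K x h) S) :
    (Summable fun t : ℕ => ‖y (t + 1) - y t‖) ∧
    ∃ ybar : Euc d, Filter.Tendsto y Filter.atTop (nhds ybar) ∧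
      gradient (KDE d n K x h) ybar = 0 := by
  obtain ⟨ε, hε, c, hc, θ, hθ, hloj⟩ := ha2
  refine ms_convergence_guarantee_general d n hd hn K Khat Kcheck hRS hQM x h hh y hy S
    (hS ▸ isClosed_closure) ?_ ha1diff fun z hz => ⟨θ, hθ, ε, hε, c, hc, fun w => hloj z hz w⟩
  filter_upwards [eventually_ge_atTop τ] with t ht
  exact hS ▸ subset_closure (subset_convexHull ℝ _ ⟨t, ht, rfl⟩)
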